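/- arXiv:2005.05917 — 2 statements merged into one kernel-verified Lean document; each statement's English description precedes it below -/
import Mathlib

section
/- Let 0 < α < 1, let ν, P, ħ ∈ ℝ with ħ ≠ 0 and |1 + ħ| < 1, let a < b be reals and let ψ : [a,b] → ℝ be continuously differentiable, strictly increasing with ψ' > 0. Let (u_m) be the HAM iteration sequence with u_0(r,t) = 1 − r² and, for m ≥ 1, u_m(r,t) = (χ_m + ħ)·u_{m−1}(r,t) − (χ_m + ħ)·u_{m−1}(r,a) − ħ · I^{α,ψ}_a[ ν(∂²u_{m−1}/∂r²(r,·) + (1/r)∂u_{m−1}/∂r(r,·)) + P(1 − χ_m) ](t), where χ_1 = 0 and χ_m = 1 for m ≥ 2. Then for every r ≠ 0 and t ∈ [a,b], the series Σ_{m=0}^∞ u_m(r,t) converges and Σ_{m=0}^∞ u_m(r,t) = 1 − r² + (P − 4ν) · (ψ(t) − ψ(a))^α / Γ(α+1); in particular the sum is independent of ħ. -/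
/-!
Put `K(t) = (P - 4ν) (ψ t - ψ a)^α / Γ(α+1)`. For `r ≠ 0` the radial operator sends `1 - r²` to the
constant `-4`, and the fractional integral of a constant `c` is `c (ψ t - ψ a)^α / Γ(α+1)`
(`psiFracInt_const`), so `u₁(r,t) = -ℏ K(t)`. This does not depend on `r` and vanishes at `t = a`;
hence every later source term vanishes and the recursion reduces to `u_{m+1} = (1+ℏ) u_m`. This gives
the closed form `hamNS_succ_eq`, and the claim follows by summing the geometric series of ratio `1+ℏ`.
-/

open Real MeasureTheory intervalIntegral

/-- The ψ-fractional integral of order `α` with base point `a` of a function `f`. -/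
noncomputable def psiFracInt (α a : ℝ) (ψ f : ℝ → ℝ) (t : ℝ) : ℝ :=
  (1 / Real.Gamma α) * ∫ τ in a..t, deriv ψ τ * (ψ t - ψ τ) ^ (α - 1) * f τ

/-- The indicator `χ_m`: `χ_m = 0` for `m ≤ 1` and `χ_m = 1` for `m > 1`. -/
noncomputable def chiHAM (m : ℕ) : ℝ := if m ≤ 1 then 0 else 1

/-- The HAM iteration for the time-fractional Navier–Stokes equation in cylindrical
coordinates with initial guess `u₀(r,t) = 1 - r²`. -/
noncomputable def hamNS (α a ν P ℏ : ℝ) (ψ : ℝ → ℝ) : ℕ → ℝ → ℝ → ℝ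
  | 0 => fun r _ => 1 - r ^ 2
  | m + 1 => fun r t =>
      (chiHAM (m + 1) + ℏ) * hamNS α a ν P ℏ ψ m r t
      - (chiHAM (m + 1) + ℏ) * hamNS α a ν P ℏ ψ m r a
      - ℏ * psiFracInt α a ψ (fun τ =>
          ν * (deriv (deriv (fun r' => hamNS α a ν P ℏ ψ m r' τ)) r
            + (1 / r) * deriv (fun r' => hamNS α a ν P ℏ ψ m r' τ) r)
          + P * (1 - chiHAM (m + 1))) t

/-- Although the integrand may be singular at `τ = t`, it is the derivative of
`-(ψ t - ψ τ)^α / α`, which is continuous up to `t`, and it is nonnegative, hence integrable. -/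
lemma integral_psi_kernel {α a b : ℝ} (hα₀ : 0 < α) {ψ : ℝ → ℝ}
    (hψc : ContinuousOn ψ (Set.Icc a b)) (hψmono : StrictMonoOn ψ (Set.Icc a b))
    (hψ' : ∀ x ∈ Set.Icc a b, 0 < deriv ψ x) {t : ℝ} (ht : t ∈ Set.Icc a b) :
    ∫ τ in a..t, deriv ψ τ * (ψ t - ψ τ) ^ (α - 1) = (ψ t - ψ a) ^ α / α := by
  have hsub : Set.Icc a t ⊆ Set.Icc a b := Set.Icc_subset_Icc_right ht.2
  have hcont : ContinuousOn (fun τ => -((ψ t - ψ τ) ^ α / α)) (Set.Icc a t) :=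
    (((continuousOn_const.sub (hψc.mono hsub)).rpow_const
      (fun _ _ => Or.inr hα₀.le)).div_const α).neg
  have hpos : ∀ τ ∈ Set.Ioo a t, 0 < ψ t - ψ τ := fun τ hτ =>
    sub_pos.2 (hψmono (hsub ⟨hτ.1.le, hτ.2.le⟩) ht hτ.2)
  have hderiv : ∀ τ ∈ Set.Ioo a t, HasDerivAt (fun τ => -((ψ t - ψ τ) ^ α / α))
      (deriv ψ τ * (ψ t - ψ τ) ^ (α - 1)) τ := by
    intro τ hτ
    -- A nonzero value of `deriv` forces differentiability.
    have hd : HasDerivAt ψ (deriv ψ τ) τ :=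
      (differentiableAt_of_deriv_ne_zero (hψ' τ (hsub ⟨hτ.1.le, hτ.2.le⟩)).ne').hasDerivAt
    have h := (((hd.const_sub (ψ t)).rpow_const (p := α) (Or.inl (hpos τ hτ).ne')).div_const α).neg
    refine h.congr_deriv ?_
    field_simp
  have hint : IntervalIntegrable (fun τ => deriv ψ τ * (ψ t - ψ τ) ^ (α - 1)) volume a t := by
    rw [intervalIntegrable_iff_integrableOn_Ioc_of_le ht.1]
    exact integrableOn_deriv_of_nonneg hcont hderiv fun τ hτ =>
      mul_nonneg (hψ' τ (hsub ⟨hτ.1.le, hτ.2.le⟩)).le (Real.rpow_nonneg (hpos τ hτ).le _)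
  rw [integral_eq_sub_of_hasDerivAt_of_le ht.1 hcont hderiv hint]
  simp [Real.zero_rpow hα₀.ne']

/-- The fractional integral of a function equal to the constant `c` on `[a, b]`. -/
lemma psiFracInt_const {α a b : ℝ} (hα₀ : 0 < α) {ψ : ℝ → ℝ}
    (hψc : ContinuousOn ψ (Set.Icc a b)) (hψmono : StrictMonoOn ψ (Set.Icc a b))
    (hψ' : ∀ x ∈ Set.Icc a b, 0 < deriv ψ x) {t : ℝ} (ht : t ∈ Set.Icc a b)
    {f : ℝ → ℝ} {c : ℝ} (hf : ∀ τ ∈ Set.Icc a b, f τ = c) :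
    psiFracInt α a ψ f t = c * (ψ t - ψ a) ^ α / Real.Gamma (α + 1) := by
  have hcongr : ∫ τ in a..t, deriv ψ τ * (ψ t - ψ τ) ^ (α - 1) * f τ
      = ∫ τ in a..t, deriv ψ τ * (ψ t - ψ τ) ^ (α - 1) * c := by
    refine intervalIntegral.integral_congr fun τ hτ => ?_
    rw [Set.uIcc_of_le ht.1] at hτ
    simp only [hf τ ⟨hτ.1, hτ.2.trans ht.2⟩]
  have hΓ : Real.Gamma α ≠ 0 := (Real.Gamma_pos_of_pos hα₀).ne'
  rw [psiFracInt, hcongr, intervalIntegral.integral_mul_const,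
    integral_psi_kernel hα₀ hψc hψmono hψ' ht, Real.Gamma_add_one hα₀.ne']
  field_simp

/-- Away from `r = 0` the iterates of positive index do not depend on `r`. The values at `r = 0`
are different, because of the junk value of `1 / r`, but a neighbourhood of `r ≠ 0` avoids them. -/
lemma hamNS_succ_eq {α a b : ℝ} (ν P ℏ : ℝ) (hα₀ : 0 < α) (hab : a < b) {ψ : ℝ → ℝ}
    (hψc : ContinuousOn ψ (Set.Icc a b)) (hψmono : StrictMonoOn ψ (Set.Icc a b))
    (hψ' : ∀ x ∈ Set.Icc a b, 0 < deriv ψ x) (m : ℕ) :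
    ∀ r : ℝ, r ≠ 0 → ∀ t ∈ Set.Icc a b, hamNS α a ν P ℏ ψ (m + 1) r t
      = (1 + ℏ) ^ m * (-ℏ * ((P - 4 * ν) * (ψ t - ψ a) ^ α / Real.Gamma (α + 1))) := by
  induction m with
  | zero =>
    intro r hr t ht
    have hd : deriv (fun r' : ℝ => 1 - r' ^ 2) = fun r' => -2 * r' := by
      ext x
      simp
    have hd2 : deriv (fun r' : ℝ => -2 * r') r = -2 := by
      simp
    rw [hamNS]
    beta_reduce
    rw [psiFracInt_const (c := P - 4 * ν) hα₀ hψc hψmono hψ' ht]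
    · simp [hamNS]
    · intro τ _
      simp only [hamNS, hd, hd2, chiHAM]
      field_simp
      norm_num
      ring
  | succ m ih =>
    intro r hr t ht
    rw [hamNS]
    beta_reduce
    rw [psiFracInt_const (c := 0) hα₀ hψc hψmono hψ' ht, ih r hr t ht,
      ih r hr a ⟨le_rfl, hab.le⟩]
    · simp [chiHAM, Real.zero_rpow hα₀.ne']
      ring
    · intro τ hτ
      have hev : (fun r' => hamNS α a ν P ℏ ψ (m + 1) r' τ) =ᶠ[nhds r] fun _ =>
          (1 + ℏ) ^ m * (-ℏ * ((P - 4 * ν) * (ψ τ - ψ a) ^ α / Real.Gamma (α + 1))) := by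
        filter_upwards [isOpen_ne.mem_nhds hr] with r' hr'
        exact ih r' hr' τ hτ
      rw [hev.deriv.deriv_eq, hev.deriv_eq]
      simp [chiHAM]

theorem hamNS_series_sum (α ν P ℏ a b : ℝ) (hα₀ : 0 < α) (hα₁ : α < 1) (hℏ : ℏ ≠ 0)
    (hℏ' : |1 + ℏ| < 1) (hab : a < b)
    (ψ : ℝ → ℝ) (hψC1 : ContDiffOn ℝ 1 ψ (Set.Icc a b))
    (hψmono : StrictMonoOn ψ (Set.Icc a b))
    (hψ' : ∀ x ∈ Set.Icc a b, 0 < deriv ψ x) :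
    ∀ r : ℝ, r ≠ 0 → ∀ t ∈ Set.Icc a b,
      HasSum (fun m : ℕ => hamNS α a ν P ℏ ψ m r t)
        (1 - r ^ 2 + (P - 4 * ν) * (ψ t - ψ a) ^ α / Real.Gamma (α + 1)) := by
  intro r hr t ht
  rw [← hasSum_nat_add_iff' 1]
  have hgeo := (hasSum_geometric_of_abs_lt_one hℏ').mul_right
    (-ℏ * ((P - 4 * ν) * (ψ t - ψ a) ^ α / Real.Gamma (α + 1)))
  simp only [hamNS_succ_eq ν P ℏ hα₀ hab hψC1.continuousOn hψmono hψ' _ r hr t ht]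
  have h1 : (1 - (1 + ℏ))⁻¹ * -ℏ = 1 := by
    rw [show 1 - (1 + ℏ) = -ℏ by ring]
    exact inv_mul_cancel₀ (neg_ne_zero.2 hℏ)
  rw [← mul_assoc, h1, one_mul] at hgeo
  simp only [Finset.sum_range_one, hamNS, add_sub_cancel_left]
  exact hgeo
end

section
/- Let 0 < α < 1, let ρ₀, g ∈ ℝ, let a < b be reals and let ψ : [a,b] → ℝ be continuously differentiable, strictly increasing with ψ' > 0. Define u(x,y,t) = −sin(x+y)·E_α(−2ρ₀·(ψ(t) − ψ(a))^α) + g·(ψ(t) − ψ(a))^α/Γ(α+1) and v(x,y,t) = sin(x+y)·E_α(−2ρ₀·(ψ(t) − ψ(a))^α) − g·(ψ(t) − ψ(a))^α/Γ(α+1). Then u(x,y,a) = −sin(x+y), v(x,y,a) = sin(x+y), and for all x, y and every t ∈ (a,b]: (ᶜD^{α,ψ}_a u(x,y,·))(t) + u·∂u/∂x + v·∂u/∂y = ρ₀·(∂²u/∂x² + ∂²u/∂y²) + g, and (ᶜD^{α,ψ}_a v(x,y,·))(t) + u·∂v/∂x + v·∂v/∂y = ρ₀·(∂²v/∂x² +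 ∂²v/∂y²) − g. -/
/-!
Since `v = -u` and `u` depends on `x, y` only through `x + y`, the convective terms
`u ∂u/∂x + v ∂u/∂y` vanish, and the Laplacian of `sin (x + y)` is `-2 sin (x + y)`. What remains is a
scalar statement: with `w = (ψ t - ψ a)^α`, the ψ-Caputo derivative sends
`A E_α(λ w) + k w / Γ(α + 1)` to `A λ E_α(λ w) + k` (`psiCaputo_mittagLeffler`), applied with `λ = -2 ρ₀`.

Both the Mittag-Leffler term and the linear term are series `∑ cₘ wᵐ / Γ(mα + 1)` with geometrically
bounded coefficients, on which the derivative acts as the shift `cₘ ↦ cₘ₊₁`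
(`psiCaputo_fracSeries`). To see this, substitute `s = ψ τ - ψ a` in the defining integral,
differentiate the series termwise (`hasDerivAt_fracSeries_rpow`) and integrate termwise against
`(T - s)^(-α)`, each term being a Beta integral (`integral_fracSeries`). All interchanges rest on
the convergence of `∑ Rᵐ / Γ(mα + 1)` for every `R` (`summable_pow_div_Gamma`).
-/

open Real MeasureTheory intervalIntegral

/-- The ψ-Caputo fractional derivative of order `α` (with `0 < α < 1`)
with base point `a` of a function `f`. -/
noncomputable def psiCaputo (α a : ℝ) (ψ f : ℝ → ℝ) (t : ℝ) : ℝ :=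
  (1 / Real.Gamma (1 - α)) *
    ∫ τ in a..t, deriv ψ τ * (ψ t - ψ τ) ^ (-α) * (deriv f τ / deriv ψ τ)

/-- The (real) Mittag-Leffler function `E_α(x) = Σ_{m=0}^∞ x^m / Γ(mα+1)`. -/
noncomputable def mittagLeffler (α x : ℝ) : ℝ :=
  ∑' m : ℕ, x ^ m / Real.Gamma ((m : ℝ) * α + 1)

/-! ### Growth of `Γ(mα + 1)` and the series `∑ cₘ zᵐ / Γ(mα + 1)` -/

/-- Restrict the integral `Γ(x + 1) = ∫ e⁻ˢ sˣ ds` to `s > C` and bound `sˣ` below by `Cˣ`. As `C` is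
arbitrary, `Γ(mα + 1)` outgrows every geometric sequence. -/
theorem rpow_mul_exp_neg_le_Gamma {C x : ℝ} (hC : 0 < C) (hx : 0 ≤ x) :
    C ^ x * Real.exp (-C) ≤ Real.Gamma (x + 1) := by
  rw [Real.Gamma_eq_integral (by linarith), ← integral_exp_neg_Ioi C, ← MeasureTheory.integral_const_mul]
  have hint := Real.GammaIntegral_convergent (s := x + 1) (by linarith)
  have hsub : Set.Ioi C ⊆ Set.Ioi (0 : ℝ) := Set.Ioi_subset_Ioi hC.le
  calc ∫ s in Set.Ioi C, C ^ x * Real.exp (-s)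
      ≤ ∫ s in Set.Ioi C, Real.exp (-s) * s ^ (x + 1 - 1) := by
        refine setIntegral_mono_on ((integrableOn_exp_neg_Ioi C).const_mul _)
          (hint.mono_set hsub) measurableSet_Ioi fun s hs => ?_
        rw [mul_comm, add_sub_cancel_right]
        gcongr
        exact hs.le
    _ ≤ ∫ s in Set.Ioi 0, Real.exp (-s) * s ^ (x + 1 - 1) := by
        refine setIntegral_mono_set hint ?_ hsub.eventuallyLE
        filter_upwards [ae_restrict_mem measurableSet_Ioi] with s hs
        have : (0 : ℝ) < s := hs
        simp only [Pi.zero_apply]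
        positivity

theorem Gamma_coeff_pos {α : ℝ} (hα : 0 < α) (m : ℕ) : 0 < Real.Gamma ((m : ℝ) * α + 1) :=
  Real.Gamma_pos_of_pos (by positivity)

theorem summable_pow_div_Gamma {α : ℝ} (hα : 0 < α) {R : ℝ} (hR : 0 ≤ R) :
    Summable fun m : ℕ => R ^ m / Real.Gamma ((m : ℝ) * α + 1) := by
  -- `C` is chosen so that `C ^ α = 2 R + 1`, which makes the terms at most `exp C * (1 / 2) ^ m`
  set C : ℝ := (2 * R + 1) ^ α⁻¹ with hCdef
  have hC : 0 < C := by positivity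
  have hCα : C ^ α = 2 * R + 1 := by
    rw [hCdef, ← Real.rpow_mul (by positivity), inv_mul_cancel₀ hα.ne', Real.rpow_one]
  refine Summable.of_nonneg_of_le (f := fun m : ℕ => Real.exp C * (1 / 2) ^ m)
    (fun m => div_nonneg (by positivity) (Gamma_coeff_pos hα m).le) (fun m => ?_)
    ((summable_geometric_of_lt_one (by norm_num) (by norm_num)).mul_left _)
  rw [div_le_iff₀ (Gamma_coeff_pos hα m)]
  have h := rpow_mul_exp_neg_le_Gamma hC (x := m * α) (by positivity)
  rw [mul_comm (m : ℝ) α, Real.rpow_mul hC.le, hCα, Real.rpow_natCast, mul_comm α] at h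
  calc R ^ m ≤ ((1 / 2) * (2 * R + 1)) ^ m := by gcongr; linarith
    _ = Real.exp C * (1 / 2) ^ m * ((2 * R + 1) ^ m * Real.exp (-C)) := by
        rw [mul_pow, Real.exp_neg]; field_simp
    _ ≤ _ := by gcongr

/-- The power series `∑ cₘ zᵐ / Γ(mα + 1)`; constant coefficients `cₘ = 1`
give the Mittag-Leffler function. -/
noncomputable def fracSeries (α : ℝ) (c : ℕ → ℝ) (z : ℝ) : ℝ :=
  ∑' m : ℕ, c m * z ^ m / Real.Gamma ((m : ℝ) * α + 1)

theorem summable_fracSeries {α : ℝ} (hα : 0 < α) {c : ℕ → ℝ} {M R : ℝ} (hR : 0 ≤ R)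
    (hc : ∀ m, |c m| ≤ M * R ^ m) (z : ℝ) :
    Summable fun m : ℕ => c m * z ^ m / Real.Gamma ((m : ℝ) * α + 1) := by
  refine Summable.of_norm_bounded
    ((summable_pow_div_Gamma hα (R := R * |z|) (by positivity)).mul_left M) fun m => ?_
  rw [Real.norm_eq_abs, abs_div, abs_mul, abs_pow, abs_of_pos (Gamma_coeff_pos hα m),
    ← mul_div_assoc, mul_pow, ← mul_assoc]
  have := Gamma_coeff_pos hα m
  gcongr
  exact hc m

theorem hasDerivAt_fracSeries {α : ℝ} (hα : 0 < α) {c : ℕ → ℝ} {M R : ℝ} (hR : 0 ≤ R)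
    (hc : ∀ m, |c m| ≤ M * R ^ m) (z : ℝ) :
    HasDerivAt (fracSeries α c)
      (∑' m : ℕ, c m * (m * z ^ (m - 1)) / Real.Gamma ((m : ℝ) * α + 1)) z := by
  have hM : 0 ≤ M := by simpa using (abs_nonneg _).trans (hc 0)
  set B : ℝ := |z| + 1 with hB
  have hB1 : 1 ≤ B := by simp [hB]
  -- the derivatives are dominated through `m ≤ 2 ^ m`
  refine hasDerivAt_tsum_of_isPreconnected (t := Metric.ball 0 B) (y₀ := 0)
    (g := fun (m : ℕ) (z : ℝ) => c m * z ^ m / Real.Gamma ((m : ℝ) * α + 1))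
    (g' := fun (m : ℕ) (z : ℝ) => c m * (m * z ^ (m - 1)) / Real.Gamma ((m : ℝ) * α + 1))
    ((summable_pow_div_Gamma hα (R := R * (2 * B)) (by positivity)).mul_left M)
    Metric.isOpen_ball (convex_ball _ _).isPreconnected (fun m y _ => ?_) (fun m y hy => ?_)
    (Metric.mem_ball_self (by positivity)) (summable_fracSeries hα hR hc 0) (by simp [hB])
  · exact ((hasDerivAt_pow m y).const_mul (c m)).div_const _
  · have hyB : |y| ≤ B := by simpa using (Metric.mem_ball.1 hy).le
    have hG := Gamma_coeff_pos hα m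
    have h2 : (m : ℝ) ≤ 2 ^ m := by exact_mod_cast (Nat.lt_two_pow_self (n := m)).le
    rw [Real.norm_eq_abs, abs_div, abs_mul, abs_mul, abs_pow, abs_of_pos hG, Nat.abs_cast,
      ← mul_div_assoc, mul_pow, mul_pow, ← mul_assoc M]
    have h3 : |y| ^ (m - 1) ≤ B ^ m :=
      (pow_le_pow_left₀ (abs_nonneg y) hyB _).trans (pow_le_pow_right₀ hB1 (Nat.sub_le _ _))
    gcongr
    exact hc m

/-- Termwise derivative of `∑ cₘ s^(mα) / Γ(mα + 1)`; the factor `mα` is absorbed by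
`Γ(mα + 1) = mα Γ(mα)`, and the constant term drops out, whence the index shift. -/
theorem hasDerivAt_fracSeries_rpow {α : ℝ} (hα : 0 < α) {c : ℕ → ℝ} {M R : ℝ} (hR : 0 ≤ R)
    (hc : ∀ m, |c m| ≤ M * R ^ m) {s : ℝ} (hs : 0 < s) :
    HasDerivAt (fun s => fracSeries α c (s ^ α))
      (∑' m : ℕ, c (m + 1) * s ^ (((m : ℝ) + 1) * α - 1) / Real.Gamma (((m : ℝ) + 1) * α)) s := by
  have h1 := (hasDerivAt_fracSeries hα hR hc (s ^ α)).comp s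
    (Real.hasDerivAt_rpow_const (p := α) (Or.inl hs.ne'))
  refine h1.congr_deriv ?_
  rw [← tsum_mul_right]
  rw [← Function.Injective.tsum_eq (g := Nat.succ) Nat.succ_injective]
  · refine tsum_congr fun m => ?_
    have hm : ((m : ℝ) + 1) * α ≠ 0 := by positivity
    have hG : Real.Gamma (((m : ℝ) + 1) * α) ≠ 0 :=
      (Real.Gamma_pos_of_pos (by positivity)).ne'
    have e : s ^ (((m : ℝ) + 1) * α - 1) = (s ^ α) ^ m * s ^ (α - 1) := by
      rw [← Real.rpow_natCast, ← Real.rpow_mul hs.le, ← Real.rpow_add hs]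
      congr 1; ring
    simp only [Nat.succ_eq_add_one, Nat.add_sub_cancel, Nat.cast_add, Nat.cast_one]
    rw [Real.Gamma_add_one hm, e]
    field_simp
  · intro m hm
    rcases m with _ | m
    · simp at hm
    · exact ⟨m, rfl⟩

/-! ### Termwise integration through the Beta integral -/

theorem integral_beta_scaled {p q T : ℝ} (hp : 0 < p) (hq : 0 < q) (hT : 0 < T) :
    ∫ s in Set.Ioo 0 T, (T - s) ^ (q - 1) * s ^ (p - 1) =
      T ^ (p + q - 1) * (Real.Gamma p * Real.Gamma q / Real.Gamma (p + q)) := by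
  have h := Complex.betaIntegral_scaled p q hT
  rw [Complex.betaIntegral_eq_Gamma_mul_div _ _ (by simpa) (by simpa),
    intervalIntegral.integral_of_le hT.le, integral_Ioc_eq_integral_Ioo] at h
  have h2 : ∫ x in Set.Ioo 0 T, (x : ℂ) ^ ((p : ℂ) - 1) * ((T : ℂ) - x) ^ ((q : ℂ) - 1) =
      ∫ x in Set.Ioo 0 T, (((T - x) ^ (q - 1) * x ^ (p - 1) : ℝ) : ℂ) := by
    refine setIntegral_congr_fun measurableSet_Ioo fun x hx => ?_
    rw [Complex.ofReal_mul, Complex.ofReal_cpow hx.1.le, Complex.ofReal_cpow (by linarith [hx.2])]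
    push_cast
    ring
  rw [h2, integral_complex_ofReal, ← Complex.ofReal_add, Complex.Gamma_ofReal,
    Complex.Gamma_ofReal, Complex.Gamma_ofReal, ← Complex.ofReal_one, ← Complex.ofReal_sub,
    ← Complex.ofReal_cpow hT.le] at h
  exact_mod_cast h

/-- Integrating the differentiated series against `(T - s)^(-α)` termwise, the Beta integral turns
`s^((m+1)α - 1) / Γ((m+1)α)` into `Γ(1 - α) T^(mα) / Γ(mα + 1)`. -/
theorem integral_fracSeries {α : ℝ} (hα : 0 < α) (hα₁ : α < 1) {c : ℕ → ℝ} {M R : ℝ}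
    (hR : 0 ≤ R) (hc : ∀ m, |c m| ≤ M * R ^ m) {T : ℝ} (hT : 0 < T) :
    ∫ s in Set.Ioo 0 T, (T - s) ^ (-α) *
      (∑' m : ℕ, c (m + 1) * s ^ (((m : ℝ) + 1) * α - 1) / Real.Gamma (((m : ℝ) + 1) * α)) =
      Real.Gamma (1 - α) * fracSeries α (fun m => c (m + 1)) (T ^ α) := by
  have hGpos (m : ℕ) : 0 < Real.Gamma (((m : ℝ) + 1) * α) :=
    Real.Gamma_pos_of_pos (by positivity)
  have hG1 : 0 < Real.Gamma (1 - α) := Real.Gamma_pos_of_pos (by linarith)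
  have hbeta (m : ℕ) : ∫ s in Set.Ioo 0 T, (T - s) ^ (-α) * s ^ (((m : ℝ) + 1) * α - 1) =
      Real.Gamma (1 - α) * Real.Gamma (((m : ℝ) + 1) * α) *
        ((T ^ α) ^ m / Real.Gamma ((m : ℝ) * α + 1)) := by
    have h := integral_beta_scaled (p := ((m : ℝ) + 1) * α) (q := 1 - α) (by positivity)
      (by linarith) hT
    rw [show 1 - α - 1 = -α by ring, show ((m : ℝ) + 1) * α + (1 - α) = m * α + 1 by ring,
      add_sub_cancel_right, mul_comm (m : ℝ) α, Real.rpow_mul hT.le, Real.rpow_natCast,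
      mul_comm α] at h
    rw [h]; ring
  have hpos (m : ℕ) : 0 < Real.Gamma (1 - α) * Real.Gamma (((m : ℝ) + 1) * α) *
        ((T ^ α) ^ m / Real.Gamma ((m : ℝ) * α + 1)) := by
    have := Gamma_coeff_pos hα m
    have := hGpos m
    positivity
  -- a non-integrable function would have integral `0`, but the Beta integral is positive
  have hbint (m : ℕ) : IntegrableOn (fun s => (T - s) ^ (-α) * s ^ (((m : ℝ) + 1) * α - 1))
      (Set.Ioo 0 T) := by
    by_contra hn
    exact (hpos m).ne' ((hbeta m).symm.trans (integral_undef hn))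
  set F : ℕ → ℝ → ℝ := fun m s => c (m + 1) / Real.Gamma (((m : ℝ) + 1) * α) *
    ((T - s) ^ (-α) * s ^ (((m : ℝ) + 1) * α - 1)) with hF
  have hFint (m : ℕ) : IntegrableOn (F m) (Set.Ioo 0 T) := (hbint m).const_mul _
  have hc' (m : ℕ) : |c (m + 1)| ≤ M * R * R ^ m := (hc (m + 1)).trans_eq (by ring)
  have hFnorm (m : ℕ) : ∫ s in Set.Ioo 0 T, ‖F m s‖ =
      Real.Gamma (1 - α) * (|c (m + 1)| * (T ^ α) ^ m / Real.Gamma ((m : ℝ) * α + 1)) := by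
    have h : ∫ s in Set.Ioo 0 T, ‖F m s‖ = ∫ s in Set.Ioo 0 T,
        |c (m + 1)| / Real.Gamma (((m : ℝ) + 1) * α) *
          ((T - s) ^ (-α) * s ^ (((m : ℝ) + 1) * α - 1)) := by
      refine setIntegral_congr_fun measurableSet_Ioo fun s hs => ?_
      have h1 : 0 < T - s := sub_pos.2 hs.2
      have h2 : 0 < s := hs.1
      simp only [hF, Real.norm_eq_abs]
      rw [abs_mul, abs_div, abs_of_pos (hGpos m),
        abs_of_pos (a := (T - s) ^ (-α) * s ^ (((m : ℝ) + 1) * α - 1)) (by positivity)]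
    rw [h, MeasureTheory.integral_const_mul, hbeta]
    have := (hGpos m).ne'
    field_simp
  have hsum := hasSum_integral_of_summable_integral_norm (μ := volume.restrict (Set.Ioo 0 T))
    (F := F) hFint (by
      simp_rw [hFnorm]
      exact (summable_fracSeries hα hR (c := fun m => |c (m + 1)|)
        (fun m => by simpa using hc' m) _).mul_left _)
  have hlhs : ∀ s, (T - s) ^ (-α) * (∑' m : ℕ, c (m + 1) * s ^ (((m : ℝ) + 1) * α - 1) /
      Real.Gamma (((m : ℝ) + 1) * α)) = ∑' m, F m s := fun s => by
    rw [← tsum_mul_left]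
    exact tsum_congr fun m => by simp only [hF]; ring
  simp_rw [hlhs]
  rw [← hsum.tsum_eq, fracSeries, ← tsum_mul_left]
  refine tsum_congr fun m => ?_
  simp only [hF]
  rw [MeasureTheory.integral_const_mul, hbeta]
  have := (hGpos m).ne'
  field_simp

/-! ### The ψ-Caputo derivative of Mittag-Leffler type series -/

/-- The ψ-Caputo derivative acts on series in `(ψ t - ψ a)^α` by shifting the coefficients. The
substitution `s = ψ τ - ψ a` reduces this to `integral_fracSeries`. -/
theorem psiCaputo_fracSeries {α a b : ℝ} (hα : 0 < α) (hα₁ : α < 1) {ψ : ℝ → ℝ}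
    (hψmono : StrictMonoOn ψ (Set.Icc a b)) (hψ' : ∀ x ∈ Set.Icc a b, 0 < deriv ψ x)
    {c : ℕ → ℝ} {M R : ℝ} (hR : 0 ≤ R) (hc : ∀ m, |c m| ≤ M * R ^ m)
    {t : ℝ} (ht : t ∈ Set.Ioc a b) :
    psiCaputo α a ψ (fun s => fracSeries α c ((ψ s - ψ a) ^ α)) t =
      fracSeries α (fun m => c (m + 1)) ((ψ t - ψ a) ^ α) := by
  have hsub : Set.Icc a t ⊆ Set.Icc a b := Set.Icc_subset_Icc_right ht.2
  have hmono := hψmono.mono hsub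
  have hd : ∀ x ∈ Set.Icc a t, HasDerivAt ψ (deriv ψ x) x := fun x hx =>
    (differentiableAt_of_deriv_ne_zero (hψ' x (hsub hx)).ne').hasDerivAt
  have hT : 0 < ψ t - ψ a :=
    sub_pos.2 (hmono (Set.left_mem_Icc.2 ht.1.le) (Set.right_mem_Icc.2 ht.1.le) ht.1)
  set φ : ℝ → ℝ := fun s => ψ s - ψ a with hφ
  have hφd : ∀ x ∈ Set.Icc a t, HasDerivAt φ (deriv ψ x) x := fun x hx => (hd x hx).sub_const _
  have hφmono : StrictMonoOn φ (Set.Icc a t) := fun x hx y hy hxy =>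
    sub_lt_sub_right (hmono hx hy hxy) _
  have himg : φ '' Set.Ioo a t = Set.Ioo 0 (ψ t - ψ a) := by
    have h := ContinuousOn.image_Ioo_of_strictMonoOn ht.1.le
      (fun x hx => (hφd x hx).continuousAt.continuousWithinAt) hφmono
    simpa [hφ] using h
  have hcv := integral_image_eq_integral_abs_deriv_smul (s := Set.Ioo a t) (f := φ)
    measurableSet_Ioo
    (fun x hx => (hφd x (Set.Ioo_subset_Icc_self hx)).hasDerivWithinAt)
    (hφmono.injOn.mono Set.Ioo_subset_Icc_self)
    (fun s => ((ψ t - ψ a) - s) ^ (-α) *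
      (∑' m : ℕ, c (m + 1) * s ^ (((m : ℝ) + 1) * α - 1) / Real.Gamma (((m : ℝ) + 1) * α)))
  rw [himg, integral_fracSeries hα hα₁ hR hc hT] at hcv
  have hG1 : Real.Gamma (1 - α) ≠ 0 := (Real.Gamma_pos_of_pos (by linarith)).ne'
  rw [psiCaputo, intervalIntegral.integral_of_le ht.1.le, integral_Ioc_eq_integral_Ioo]
  have : ∫ τ in Set.Ioo a t, deriv ψ τ * (ψ t - ψ τ) ^ (-α) *
      (deriv (fun s => fracSeries α c ((ψ s - ψ a) ^ α)) τ / deriv ψ τ) =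
      Real.Gamma (1 - α) * fracSeries α (fun m => c (m + 1)) ((ψ t - ψ a) ^ α) := by
    rw [hcv]
    refine setIntegral_congr_fun measurableSet_Ioo fun τ hτ => ?_
    have hτ' := Set.Ioo_subset_Icc_self hτ
    have hpos : 0 < φ τ := by
      have : φ τ ∈ Set.Ioo 0 (ψ t - ψ a) := himg ▸ Set.mem_image_of_mem φ hτ
      exact this.1
    have hdτ := ((hasDerivAt_fracSeries_rpow hα hR hc hpos).comp τ (hφd τ hτ')).deriv
    have hψτ := hψ' τ (hsub hτ')
    simp only [smul_eq_mul, abs_of_pos hψτ]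
    have e : deriv (fun s => fracSeries α c ((ψ s - ψ a) ^ α)) τ = _ := hdτ
    rw [e, mul_div_cancel_right₀ _ hψτ.ne']
    simp only [hφ, sub_sub_sub_cancel_right]
    ring
  rw [this]
  field_simp

/-- `A E_α(λ w) + k w / Γ(α + 1)` with `w = (ψ t - ψ a)^α` is the series with coefficients
`A λᵐ + k [m = 1]`, and shifting these gives `A λ λᵐ + k [m = 0]`. -/
theorem psiCaputo_mittagLeffler {α a b : ℝ} (hα : 0 < α) (hα₁ : α < 1) {ψ : ℝ → ℝ}
    (hψmono : StrictMonoOn ψ (Set.Icc a b)) (hψ' : ∀ x ∈ Set.Icc a b, 0 < deriv ψ x)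
    (A lam k : ℝ) {t : ℝ} (ht : t ∈ Set.Ioc a b) :
    psiCaputo α a ψ (fun s => A * mittagLeffler α (lam * (ψ s - ψ a) ^ α)
        + k * (ψ s - ψ a) ^ α / Real.Gamma (α + 1)) t =
      A * lam * mittagLeffler α (lam * (ψ t - ψ a) ^ α) + k := by
  have hML (B z : ℝ) : HasSum (fun m : ℕ => B * lam ^ m * z ^ m / Real.Gamma ((m : ℝ) * α + 1))
      (B * mittagLeffler α (lam * z)) := by
    have h := (summable_fracSeries hα (c := fun m => lam ^ m) (M := 1) (abs_nonneg lam)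
      (fun m => by simp [abs_pow]) z).hasSum.mul_left B
    have e : ∑' m : ℕ, lam ^ m * z ^ m / Real.Gamma ((m : ℝ) * α + 1)
        = mittagLeffler α (lam * z) := by simp only [mittagLeffler, mul_pow]
    rw [e] at h
    exact h.congr_fun fun m => by ring
  set c : ℕ → ℝ := fun m => A * lam ^ m + if m = 1 then k else 0 with hcdef
  have hc : ∀ m, |c m| ≤ (|A| + |k|) * (|lam| + 1) ^ m := fun m => by
    have h1 : |A * lam ^ m| ≤ |A| * (|lam| + 1) ^ m := by
      rw [abs_mul, abs_pow]; gcongr; linarith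
    have h2 : |if m = 1 then k else 0| ≤ |k| * (|lam| + 1) ^ m := by
      have : 1 ≤ (|lam| + 1) ^ m := one_le_pow₀ (by linarith [abs_nonneg lam])
      split_ifs
      · nlinarith [abs_nonneg k]
      · simp; positivity
    calc |c m| ≤ _ := abs_add_le _ _
      _ ≤ _ := by linarith
  have hf : (fun s => A * mittagLeffler α (lam * (ψ s - ψ a) ^ α)
        + k * (ψ s - ψ a) ^ α / Real.Gamma (α + 1)) =
      fun s => fracSeries α c ((ψ s - ψ a) ^ α) := by
    funext s
    have h2 := hasSum_ite_eq (1 : ℕ) (k * (ψ s - ψ a) ^ α / Real.Gamma (α + 1))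
    rw [← ((hML A ((ψ s - ψ a) ^ α)).add h2).tsum_eq, fracSeries]
    refine tsum_congr fun m => ?_
    by_cases hm : m = 1
    · subst hm; simp [hcdef]; ring
    · simp [hcdef, hm]
  rw [hf, psiCaputo_fracSeries hα hα₁ hψmono hψ' (by positivity) hc ht,
    ← ((hML (A * lam) ((ψ t - ψ a) ^ α)).add (hasSum_ite_eq (0 : ℕ) k)).tsum_eq, fracSeries]
  refine tsum_congr fun m => ?_
  by_cases hm : m = 0
  · subst hm; simp [hcdef]
  · simp [hcdef, hm]; ring

/-! ### Spatial derivatives and the Navier–Stokes system -/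

theorem deriv_sin_add_left (A K y : ℝ) :
    deriv (fun x => A * Real.sin (x + y) + K) = fun x => A * Real.cos (x + y) := by
  funext x
  simp

theorem deriv_cos_add_left (A y : ℝ) :
    deriv (fun x => A * Real.cos (x + y)) = fun x => -A * Real.sin (x + y) := by
  funext x
  simp

theorem deriv_sin_add_right (A K x : ℝ) :
    deriv (fun y => A * Real.sin (x + y) + K) = fun y => A * Real.cos (x + y) := by
  simpa only [add_comm x] using deriv_sin_add_left A K x

theorem deriv_cos_add_right (A x : ℝ) :
    deriv (fun y => A * Real.cos (x + y)) = fun y => -A * Real.sin (x + y) := by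
  simpa only [add_comm x] using deriv_cos_add_left A x

theorem exact_solution_NS_cartesian (α ρ₀ g a b : ℝ) (hα₀ : 0 < α) (hα₁ : α < 1)
    (hab : a < b)
    (ψ : ℝ → ℝ) (hψC1 : ContDiffOn ℝ 1 ψ (Set.Icc a b))
    (hψmono : StrictMonoOn ψ (Set.Icc a b))
    (hψ' : ∀ x ∈ Set.Icc a b, 0 < deriv ψ x)
    (u v : ℝ → ℝ → ℝ → ℝ)
    (hu : ∀ x y t, u x y t =
      -Real.sin (x + y) * mittagLeffler α (-2 * ρ₀ * (ψ t - ψ a) ^ α)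
        + g * (ψ t - ψ a) ^ α / Real.Gamma (α + 1))
    (hv : ∀ x y t, v x y t =
      Real.sin (x + y) * mittagLeffler α (-2 * ρ₀ * (ψ t - ψ a) ^ α)
        - g * (ψ t - ψ a) ^ α / Real.Gamma (α + 1)) :
    (∀ x y, u x y a = -Real.sin (x + y)) ∧
    (∀ x y, v x y a = Real.sin (x + y)) ∧
    ∀ x y : ℝ, ∀ t ∈ Set.Ioc a b,
      (psiCaputo α a ψ (fun s => u x y s) t
          + u x y t * deriv (fun x' => u x' y t) x
          + v x y t * deriv (fun y' => u x y' t) y =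
        ρ₀ * (deriv (deriv (fun x' => u x' y t)) x
          + deriv (deriv (fun y' => u x y' t)) y) + g) ∧
      (psiCaputo α a ψ (fun s => v x y s) t
          + u x y t * deriv (fun x' => v x' y t) x
          + v x y t * deriv (fun y' => v x y' t) y =
        ρ₀ * (deriv (deriv (fun x' => v x' y t)) x
          + deriv (deriv (fun y' => v x y' t)) y) - g) := by
  have hu' : ∀ x y t, u x y t = -mittagLeffler α (-2 * ρ₀ * (ψ t - ψ a) ^ α) * Real.sin (x + y)
      + g * (ψ t - ψ a) ^ α / Real.Gamma (α + 1) := fun x y t => by rw [hu]; ring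
  have hv' : ∀ x y t, v x y t = mittagLeffler α (-2 * ρ₀ * (ψ t - ψ a) ^ α) * Real.sin (x + y)
      + -(g * (ψ t - ψ a) ^ α / Real.Gamma (α + 1)) := fun x y t => by rw [hv]; ring
  have hML0 : mittagLeffler α 0 = 1 := by
    rw [mittagLeffler, tsum_eq_single 0 (fun m hm => by simp [hm])]
    simp
  refine ⟨fun x y => ?_, fun x y => ?_, fun x y t ht => ?_⟩
  · simp [hu, Real.zero_rpow hα₀.ne', hML0]
  · simp [hv, Real.zero_rpow hα₀.ne', hML0]
  have hDu : psiCaputo α a ψ (fun s => u x y s) t = -Real.sin (x + y) * (-2 * ρ₀) *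
      mittagLeffler α (-2 * ρ₀ * (ψ t - ψ a) ^ α) + g := by
    rw [← psiCaputo_mittagLeffler hα₀ hα₁ hψmono hψ' _ _ _ ht]
    congr 1
    funext s
    exact hu x y s
  have hDv : psiCaputo α a ψ (fun s => v x y s) t = Real.sin (x + y) * (-2 * ρ₀) *
      mittagLeffler α (-2 * ρ₀ * (ψ t - ψ a) ^ α) + -g := by
    rw [← psiCaputo_mittagLeffler hα₀ hα₁ hψmono hψ' _ _ _ ht]
    congr 1
    funext s
    rw [hv]
    ring
  rw [hDu, hDv]
  -- `v = -u` and `∂u/∂x = ∂u/∂y`, so the convective terms cancel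
  simp only [hu', hv', deriv_sin_add_left, deriv_sin_add_right, deriv_cos_add_left,
    deriv_cos_add_right]
  constructor <;> ring
end
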